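/- Let α,β>−1 and let N≥1 be an integer. For f in the linear span of {Φ_{2n+1}^{α,β}: n≥0} define (R̃_N^{α,β})⁺f = Σ_{n≥0} (λ_{n+1}^{α,β})^{−N/2}⟨f,Φ_{2n+1}^{α,β}⟩_{L²(μ⁺_{α,β})}·δ_N^odd Φ_{2n+1}^{α,β}. Then (R̃_N^{α,β})⁺ is bounded on L²(μ⁺_{α,β}): there is C such that ‖(R̃_N^{α,β})⁺f‖_{L²(μ⁺_{α,β})} ≤ C‖f‖_{L²(μ⁺_{α,β})} for all f in the span. -/

import Mathlib

open MeasureTheory Real Set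
open scoped ENNReal

noncomputable section

/-- The classical Jacobi polynomial `P_n^{α,β}`. -/
def jacobiP (α β : ℝ) (n : ℕ) (x : ℝ) : ℝ :=
  ∑ m ∈ Finset.range (n + 1),
    (Real.Gamma (α + n + 1) * Real.Gamma (α + β + n + m + 1)) /
      ((m.factorial : ℝ) * ((n - m).factorial : ℝ) * Real.Gamma (α + β + n + 1) *
        Real.Gamma (α + m + 1)) * ((x - 1) / 2) ^ m

/-- `Ψ^{α,β}(θ) = |sin(θ/2)|^{α+1/2} (cos(θ/2))^{β+1/2}`. -/
def jPsi (α β θ : ℝ) : ℝ := |Real.sin (θ / 2)| ^ (α + 1 / 2) * Real.cos (θ / 2) ^ (β + 1 / 2)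

/-- The measure `μ_{α,β}` on `(−π, π)`, with density `(Ψ^{α,β})²` w.r.t. Lebesgue measure. -/
def jacobiMeasure (α β : ℝ) : Measure ℝ :=
  (volume.restrict (Ioo (-π) π)).withDensity fun θ => ENNReal.ofReal (jPsi α β θ ^ 2)

/-- The restriction `μ⁺_{α,β}` of `μ_{α,β}` to `(0, π)`. -/
def jacobiMeasurePlus (α β : ℝ) : Measure ℝ := (jacobiMeasure α β).restrict (Ioo 0 π)

/-- The normalizing constant `c_n^{α,β}` making `𝒫_n^{α,β}` have unit `L²(μ⁺)` norm. -/
def cJ (α β : ℝ) (n : ℕ) : ℝ :=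
  (∫ θ, jacobiP α β n (Real.cos θ) ^ 2 ∂(jacobiMeasurePlus α β)) ^ (-(1 / 2) : ℝ)

/-- The normalized trigonometric Jacobi polynomial `𝒫_n^{α,β}(θ)`. -/
def trigP (α β : ℝ) (n : ℕ) (θ : ℝ) : ℝ := cJ α β n * jacobiP α β n (Real.cos θ)

/-- The eigenvalue `λ_n^{α,β} = (n + (α+β+1)/2)²`. -/
def jLam (α β : ℝ) (n : ℕ) : ℝ := ((n : ℝ) + (α + β + 1) / 2) ^ 2

/-- The symmetrized system `Φ_n^{α,β}`. -/
def symPhi (α β : ℝ) (n : ℕ) (θ : ℝ) : ℝ :=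
  if Even n then (Real.sqrt 2)⁻¹ * trigP α β (n / 2) θ
  else (Real.sqrt 2)⁻¹ * (Real.sin θ / 2) * trigP (α + 1) (β + 1) ((n - 1) / 2) θ

/-- The Jacobi functions `φ_n^{α,β} = Ψ^{α,β} 𝒫_n^{α,β}`. -/
def phiFun (α β : ℝ) (n : ℕ) (θ : ℝ) : ℝ := jPsi α β θ * trigP α β n θ

/-- The symmetrized Jacobi function system `Θ_n^{α,β}`. -/
def jTheta (α β : ℝ) (n : ℕ) (θ : ℝ) : ℝ :=
  if Even n then (Real.sqrt 2)⁻¹ * phiFun α β (n / 2) θ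
  else (Real.sqrt 2)⁻¹ * Real.sign θ * phiFun (α + 1) (β + 1) ((n - 1) / 2) θ

/-- The symmetrized Jacobi–Poisson semigroup `ℍ_t^{α,β}f(θ)` (polynomial setting). -/
def symH (α β : ℝ) (f : ℝ → ℝ) (t θ : ℝ) : ℝ :=
  ∑' n : ℕ, Real.exp (-t * Real.sqrt (jLam α β ((n + 1) / 2))) *
    (∫ φ, f φ * symPhi α β n φ ∂(jacobiMeasure α β)) * symPhi α β n θ

/-- The symmetrized Jacobi–Poisson semigroup `H̄_t^{α,β}f(θ)` (function setting). -/
def symHbar (α β : ℝ) (f : ℝ → ℝ) (t θ : ℝ) : ℝ :=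
  ∑' n : ℕ, Real.exp (-t * Real.sqrt (jLam α β ((n + 1) / 2))) *
    (∫ φ in Ioo (-π) π, f φ * jTheta α β n φ) * jTheta α β n θ

/-- The non-symmetrized Jacobi–Poisson semigroup `ℋ_t^{α,β}f(θ)` (polynomial setting). -/
def jacH (α β : ℝ) (f : ℝ → ℝ) (t θ : ℝ) : ℝ :=
  ∑' n : ℕ, Real.exp (-t * Real.sqrt (jLam α β n)) *
    (∫ φ, f φ * trigP α β n φ ∂(jacobiMeasurePlus α β)) * trigP α β n θ

/-- The non-symmetrized Jacobi–Poisson semigroup `𝓗̄_t^{α,β}f(θ)` (function setting). -/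
def jacHbar (α β : ℝ) (f : ℝ → ℝ) (t θ : ℝ) : ℝ :=
  ∑' n : ℕ, Real.exp (-t * Real.sqrt (jLam α β n)) *
    (∫ φ in Ioo 0 π, f φ * phiFun α β n φ) * phiFun α β n θ

/-- The symmetrized derivative `𝔻_{α,β}`. -/
def symD (α β : ℝ) (f : ℝ → ℝ) : ℝ → ℝ := fun θ =>
  deriv f θ + (α - β + (α + β + 1) * Real.cos θ) / Real.sin θ * ((f θ - f (-θ)) / 2)

/-- The symmetrized derivative `D̄_{α,β}` (function setting). -/
def symDbar (α β : ℝ) (f : ℝ → ℝ) : ℝ → ℝ := fun θ =>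
  deriv f θ -
    ((2 * α + 1) / 4 * (Real.cos (θ / 2) / Real.sin (θ / 2)) -
      (2 * β + 1) / 4 * Real.tan (θ / 2)) * f (-θ)

/-- The derivative `D_{α,β}` (non-symmetrized function setting). -/
def jacD (α β : ℝ) (f : ℝ → ℝ) : ℝ → ℝ := fun θ =>
  deriv f θ - (2 * α + 1) / 4 * (Real.cos (θ / 2) / Real.sin (θ / 2)) * f θ +
    (2 * β + 1) / 4 * Real.tan (θ / 2) * f θ

/-- `δ*_{α,β} = −d/dθ − (α+1/2)cot(θ/2) + (β+1/2)tan(θ/2)`. -/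
def delStar (α β : ℝ) (f : ℝ → ℝ) : ℝ → ℝ := fun θ =>
  -deriv f θ - (α + 1 / 2) * (Real.cos (θ / 2) / Real.sin (θ / 2)) * f θ +
    (β + 1 / 2) * Real.tan (θ / 2) * f θ

/-- `δ_N^even`: `N` alternating factors, rightmost (first applied) one being `δ = d/dθ`. -/
def deltaEven (α β : ℝ) : ℕ → (ℝ → ℝ) → ℝ → ℝ
  | 0 => fun f => f
  | N + 1 => fun f => (if N % 2 = 0 then deriv else delStar α β) (deltaEven α β N f)

/-- `δ_N^odd`: `N` alternating factors, rightmost (first applied) one being `δ*_{α,β}`. -/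
def deltaOdd (α β : ℝ) : ℕ → (ℝ → ℝ) → ℝ → ℝ
  | 0 => fun f => f
  | N + 1 => fun f => (if N % 2 = 0 then delStar α β else deriv) (deltaOdd α β N f)

/-- The Jacobi–Poisson kernel `H_t^{α,β}(θ,φ)` (even part of the symmetrized kernel). -/
def jHker (α β t θ φ : ℝ) : ℝ :=
  (1 / 2) * ∑' n : ℕ, Real.exp (-t * Real.sqrt (jLam α β n)) * trigP α β n θ * trigP α β n φ

/-- The kernel `H̃_t^{α,β}(θ,φ)` (odd part of the symmetrized kernel). -/
def jHtil (α β t θ φ : ℝ) : ℝ :=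
  (1 / 8) * Real.sin θ * Real.sin φ *
    ∑' n : ℕ, Real.exp (-t * Real.sqrt (jLam α β (n + 1))) *
      trigP (α + 1) (β + 1) n θ * trigP (α + 1) (β + 1) n φ

/-- `μ⁺_{α,β}(B(θ,r))` where `B(θ,r) = (θ−r, θ+r) ∩ (0,π)`. -/
def ballMeasure (α β θ r : ℝ) : ℝ≥0∞ := jacobiMeasurePlus α β (Ioo (θ - r) (θ + r))

/-- The Muckenhoupt class `A_p^{α,β}` (`1 < p < ∞`) on `(−π,π)` w.r.t. `μ_{α,β}`. -/
def IsApWeight (α β p : ℝ) (w : ℝ → ℝ) : Prop :=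
  (∀ θ, 0 ≤ w θ) ∧
    ∃ C : ℝ, ∀ a b : ℝ, -π ≤ a → a ≤ b → b ≤ π →
      (∫⁻ θ in Ioo a b, ENNReal.ofReal (w θ) ∂(jacobiMeasure α β)) *
          (∫⁻ θ in Ioo a b, ENNReal.ofReal (w θ ^ (-1 / (p - 1))) ∂(jacobiMeasure α β)) ^
            (p - 1) ≤
        ENNReal.ofReal C * jacobiMeasure α β (Ioo a b) ^ p

/-- The Muckenhoupt class `A_1^{α,β}` on `(−π,π)` w.r.t. `μ_{α,β}`. -/
def IsA1Weight (α β : ℝ) (w : ℝ → ℝ) : Prop :=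
  (∀ θ, 0 ≤ w θ) ∧
    ∃ C : ℝ, ∀ a b : ℝ, -π ≤ a → a ≤ b → b ≤ π →
      ∫⁻ θ in Ioo a b, ENNReal.ofReal (w θ) ∂(jacobiMeasure α β) ≤
        ENNReal.ofReal C *
          essInf (fun θ => ENNReal.ofReal (w θ)) ((jacobiMeasure α β).restrict (Ioo a b)) *
          jacobiMeasure α β (Ioo a b)

/-- The Muckenhoupt class `(A_p^{α,β})⁺` (`1 < p < ∞`) on `(0,π)` w.r.t. `μ⁺_{α,β}`. -/
def IsApWeightPlus (α β p : ℝ) (w : ℝ → ℝ) : Prop :=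
  (∀ θ, 0 ≤ w θ) ∧
    ∃ C : ℝ, ∀ a b : ℝ, 0 ≤ a → a ≤ b → b ≤ π →
      (∫⁻ θ in Ioo a b, ENNReal.ofReal (w θ) ∂(jacobiMeasurePlus α β)) *
          (∫⁻ θ in Ioo a b, ENNReal.ofReal (w θ ^ (-1 / (p - 1))) ∂(jacobiMeasurePlus α β)) ^
            (p - 1) ≤
        ENNReal.ofReal C * jacobiMeasurePlus α β (Ioo a b) ^ p

/-- The Muckenhoupt class `(A_1^{α,β})⁺` on `(0,π)` w.r.t. `μ⁺_{α,β}`. -/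
def IsA1WeightPlus (α β : ℝ) (w : ℝ → ℝ) : Prop :=
  (∀ θ, 0 ≤ w θ) ∧
    ∃ C : ℝ, ∀ a b : ℝ, 0 ≤ a → a ≤ b → b ≤ π →
      ∫⁻ θ in Ioo a b, ENNReal.ofReal (w θ) ∂(jacobiMeasurePlus α β) ≤
        ENNReal.ofReal C *
          essInf (fun θ => ENNReal.ofReal (w θ)) ((jacobiMeasurePlus α β).restrict (Ioo a b)) *
          jacobiMeasurePlus α β (Ioo a b)

/-- The double power weight `w_{r,s}(θ) = |sin(θ/2)|^r (cos(θ/2))^s`. -/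
def wrs (r s θ : ℝ) : ℝ := |Real.sin (θ / 2)| ^ r * Real.cos (θ / 2) ^ s


/-- The restricted Riesz–Jacobi transform `(R̃_N^{α,β})⁺` (on the span of the odd `Φ`'s). -/
def restRiesz (α β : ℝ) (N : ℕ) (f : ℝ → ℝ) (θ : ℝ) : ℝ :=
  ∑' n : ℕ, jLam α β (n + 1) ^ (-(N : ℝ) / 2) *
    (∫ φ, f φ * symPhi α β (2 * n + 1) φ ∂(jacobiMeasurePlus α β)) *
    deltaOdd α β N (symPhi α β (2 * n + 1)) θ

/-!
On `L²(μ⁺)`, integration by parts makes `δ*` adjoint to `δ`, with `δ*` acting on odd and `δ`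
on even trigonometric polynomials, and the hypergeometric equation gives
`δ δ* Φ_{2n+1} = (λ_{n+1} - λ_0) Φ_{2n+1}`. Symmetry of `δ δ*` and distinctness of its eigenvalues
make both the `Φ_{2n+1}` and the `δ_N^odd Φ_{2n+1}` orthogonal systems, with
`‖δ_N^odd Φ_{2n+1}‖² = (λ_{n+1} - λ_0)^N ‖Φ_{2n+1}‖²`. Since `0 ≤ λ_{n+1} - λ_0 ≤ λ_{n+1}`, the
transform is diagonal between these systems with multipliers of size at most one, so it is a
contraction.
-/

section Orthogonal

variable {Ω ι : Type*} [MeasurableSpace Ω] {μ : Measure Ω} {e g : ι → Ω → ℝ}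

/-- Pairwise orthogonal families in `L²(μ)`, kept as honest functions rather than classes so that
they can be evaluated pointwise. The members need not be normalized, nor even nonzero. -/
structure IsOrthogonalSystem (μ : Measure Ω) (e : ι → Ω → ℝ) : Prop where
  memLp : ∀ n, MemLp (e n) 2 μ
  integral_mul_eq_zero : Pairwise fun n m => ∫ x, e n x * e m x ∂μ = 0

namespace IsOrthogonalSystem

lemma integrable_mul (he : IsOrthogonalSystem μ e) (n m : ι) :
    Integrable (fun x => e n x * e m x) μ :=
  (he.memLp n).integrable_mul (he.memLp m)

lemma integral_finsupp_sum_mul (he : IsOrthogonalSystem μ e) (a : ι →₀ ℝ) (n : ι) :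
    ∫ x, (∑ m ∈ a.support, a m * e m x) * e n x ∂μ = a n * ∫ x, e n x ^ 2 ∂μ := by
  simp only [Finset.sum_mul, mul_assoc]
  rw [integral_finsetSum _ fun m _ => (he.integrable_mul m n).const_mul _,
    Finset.sum_eq_single n]
  · simp only [integral_const_mul, sq]
  · intro m _ hmn
    rw [integral_const_mul, he.integral_mul_eq_zero hmn, mul_zero]
  · intro hn
    simp [Finsupp.notMem_support_iff.1 hn]

lemma lintegral_sum_sq (he : IsOrthogonalSystem μ e) (s : Finset ι) (b : ι → ℝ) :
    ∫⁻ x, ENNReal.ofReal ((∑ n ∈ s, b n * e n x) ^ 2) ∂μ =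
      ENNReal.ofReal (∑ n ∈ s, b n ^ 2 * ∫ x, e n x ^ 2 ∂μ) := by
  have hexpand (x : Ω) : (∑ n ∈ s, b n * e n x) ^ 2 =
      ∑ n ∈ s, ∑ m ∈ s, b n * b m * (e n x * e m x) := by
    simp only [sq, Finset.sum_mul_sum, mul_mul_mul_comm]
  have hterm (n m : ι) : Integrable (fun x => b n * b m * (e n x * e m x)) μ :=
    (he.integrable_mul n m).const_mul _
  have hmemLp : MemLp (fun x => ∑ n ∈ s, b n * e n x) 2 μ :=
    memLp_finsetSum s fun n _ => (he.memLp n).const_mul (b n)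
  rw [← ofReal_integral_eq_lintegral_ofReal hmemLp.integrable_sq
    (Filter.Eventually.of_forall fun x => sq_nonneg _)]
  simp only [hexpand]
  rw [integral_finsetSum _ fun n _ => integrable_finsetSum _ fun m _ => hterm n m]
  congr 1
  refine Finset.sum_congr rfl fun n hn => ?_
  rw [integral_finsetSum _ fun m _ => hterm n m, Finset.sum_eq_single_of_mem n hn]
  · simp only [integral_const_mul, sq]
  · intro m _ hmn
    rw [integral_const_mul, he.integral_mul_eq_zero hmn.symm, mul_zero]

lemma lintegral_tsum_coeff_sq_le (he : IsOrthogonalSystem μ e) (hg : IsOrthogonalSystem μ g)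
    {w : ι → ℝ} {C : ℝ} (hC : 0 ≤ C)
    (hw : ∀ n, w n ^ 2 * (∫ x, e n x ^ 2 ∂μ) * (∫ x, g n x ^ 2 ∂μ) ≤ C)
    {f : Ω → ℝ} (hf : f ∈ Submodule.span ℝ (range e)) :
    ∫⁻ x, ENNReal.ofReal ((∑' n, w n * (∫ y, f y * e n y ∂μ) * g n x) ^ 2) ∂μ ≤
      ENNReal.ofReal C * ∫⁻ x, ENNReal.ofReal (f x ^ 2) ∂μ := by
  obtain ⟨a, ha⟩ := Finsupp.mem_span_range_iff_exists_finsupp.1 hf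
  have hfsum (x : Ω) : f x = ∑ m ∈ a.support, a m * e m x := by
    simp [← ha, Finsupp.sum]
  have hseries (x : Ω) : ∑' n, w n * (∫ y, f y * e n y ∂μ) * g n x =
      ∑ n ∈ a.support, w n * (a n * ∫ y, e n y ^ 2 ∂μ) * g n x := by
    simp only [hfsum, he.integral_finsupp_sum_mul]
    exact tsum_eq_sum fun n hn => by simp [Finsupp.notMem_support_iff.1 hn]
  simp only [hseries]
  simp only [hfsum]
  rw [he.lintegral_sum_sq, hg.lintegral_sum_sq, ← ENNReal.ofReal_mul hC, Finset.mul_sum]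
  refine ENNReal.ofReal_le_ofReal (Finset.sum_le_sum fun n _ => ?_)
  have hnorm : 0 ≤ a n ^ 2 * ∫ x, e n x ^ 2 ∂μ :=
    mul_nonneg (sq_nonneg _) (integral_nonneg fun x => sq_nonneg _)
  calc (w n * (a n * ∫ x, e n x ^ 2 ∂μ)) ^ 2 * ∫ x, g n x ^ 2 ∂μ
      = (w n ^ 2 * (∫ x, e n x ^ 2 ∂μ) * ∫ x, g n x ^ 2 ∂μ) *
          (a n ^ 2 * ∫ x, e n x ^ 2 ∂μ) := by ring
    _ ≤ C * (a n ^ 2 * ∫ x, e n x ^ 2 ∂μ) := mul_le_mul_of_nonneg_right (hw n) hnorm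

end IsOrthogonalSystem

end Orthogonal

section Polynomial

open Polynomial

variable {a b : ℝ}

/-- The Jacobi polynomial `P_n^{a,b}` as a polynomial in the variable `u = (x - 1) / 2`, in which
its coefficients are explicit. -/
def jacobiPoly (a b : ℝ) (n : ℕ) : ℝ[X] :=
  ∑ m ∈ Finset.range (n + 1),
    C ((Real.Gamma (a + n + 1) * Real.Gamma (a + b + n + m + 1)) /
      ((m.factorial : ℝ) * ((n - m).factorial : ℝ) * Real.Gamma (a + b + n + 1) *
        Real.Gamma (a + m + 1))) * X ^ m

lemma eval_jacobiPoly (a b : ℝ) (n : ℕ) (x : ℝ) :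
    (jacobiPoly a b n).eval ((x - 1) / 2) = jacobiP a b n x := by
  simp [jacobiP, jacobiPoly, eval_finsetSum]

lemma coeff_jacobiPoly (a b : ℝ) {n m : ℕ} (hmn : m ≤ n) :
    (jacobiPoly a b n).coeff m = (Real.Gamma (a + n + 1) * Real.Gamma (a + b + n + m + 1)) /
      ((m.factorial : ℝ) * ((n - m).factorial : ℝ) * Real.Gamma (a + b + n + 1) *
        Real.Gamma (a + m + 1)) := by
  simp [jacobiPoly, coeff_X_pow, Nat.lt_succ_of_le hmn]

lemma coeff_jacobiPoly_eq_zero (a b : ℝ) {n m : ℕ} (hnm : n < m) :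
    (jacobiPoly a b n).coeff m = 0 := by
  simp [jacobiPoly, coeff_X_pow, hnm.not_ge]

lemma coeff_succ_jacobiPoly (ha : -1 < a) (hb : -1 < b) (n m : ℕ) :
    ((m : ℝ) + 1) * (m + 1 + a) * (jacobiPoly a b n).coeff (m + 1) =
      (n - m) * (n + m + a + b + 1) * (jacobiPoly a b n).coeff m := by
  rcases lt_trichotomy m n with hmn | rfl | hnm
  · obtain ⟨k, rfl⟩ := Nat.exists_eq_add_of_lt hmn
    have : (0 : ℝ) ≤ m := m.cast_nonneg
    have : (0 : ℝ) ≤ k := k.cast_nonneg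
    have hGamma_a : Real.Gamma (a + (m + 1) + 1) = (a + m + 1) * Real.Gamma (a + m + 1) := by
      rw [← Real.Gamma_add_one (by linarith)]
      ring_nf
    have hGamma_ab : Real.Gamma (a + b + (m + k + 1) + (m + 1) + 1) =
        (a + b + (m + k + 1) + m + 1) * Real.Gamma (a + b + (m + k + 1) + m + 1) := by
      rw [← Real.Gamma_add_one (by linarith)]
      ring_nf
    have hGamma_a_ne : Real.Gamma (a + m + 1) ≠ 0 := (Real.Gamma_pos_of_pos (by linarith)).ne'
    have hGamma_ab_ne : Real.Gamma (a + b + (m + k + 1) + 1) ≠ 0 :=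
      (Real.Gamma_pos_of_pos (by linarith)).ne'
    have hfactor_ne : a + m + 1 ≠ 0 := by linarith
    rw [coeff_jacobiPoly a b (by lia), coeff_jacobiPoly a b (by lia),
      show m + k + 1 - (m + 1) = k by lia, show m + k + 1 - m = k + 1 by lia,
      Nat.factorial_succ, Nat.factorial_succ]
    push_cast
    rw [hGamma_a, hGamma_ab]
    field_simp
    ring
  · simp [coeff_jacobiPoly_eq_zero]
  · simp [coeff_jacobiPoly_eq_zero, hnm, hnm.trans (Nat.lt_succ_self m)]

/-- The first-order operator `p ↦ u^{1-a} (1+u)^{1-b} (u^a (1+u)^b p)'`. With `u = (cos θ - 1) / 2`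
it is, up to a factor, `δ*_{a-1,b-1}` acting on odd trigonometric polynomials `sin θ · p(u)`. -/
def weightedDerivative (a b : ℝ) (p : ℝ[X]) : ℝ[X] :=
  X * (1 + X) * derivative p + (C a + C (a + b) * X) * p

lemma weightedDerivative_C_mul (a b c : ℝ) (p : ℝ[X]) :
    weightedDerivative a b (C c * p) = C c * weightedDerivative a b p := by
  rw [weightedDerivative, weightedDerivative, derivative_C_mul]
  ring

-- The hypergeometric equation in divergence form.
lemma derivative_weightedDerivative_jacobiPoly (ha : -1 < a) (hb : -1 < b) (n : ℕ) :
    derivative (weightedDerivative a b (jacobiPoly a b n)) =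
      C (((n : ℝ) + 1) * (n + a + b)) * jacobiPoly a b n := by
  set p := jacobiPoly a b n
  have hexpand : weightedDerivative a b p =
      X * derivative p + X * (X * derivative p) + C a * p + C (a + b) * (X * p) := by
    rw [weightedDerivative]
    ring
  ext m
  have hcoeff : (X * derivative p).coeff m = m * p.coeff m := by
    cases m with
    | zero => simp
    | succ k => rw [coeff_X_mul, coeff_derivative]; push_cast; ring
  rw [hexpand, coeff_derivative, coeff_C_mul]
  simp only [coeff_add, coeff_C_mul, coeff_X_mul, hcoeff, coeff_derivative]
  linear_combination coeff_succ_jacobiPoly ha hb n m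

/-- The even trigonometric polynomial `θ ↦ p((cos θ - 1) / 2)`. -/
def trigEval (p : ℝ[X]) (θ : ℝ) : ℝ := p.eval ((Real.cos θ - 1) / 2)

lemma hasDerivAt_trigEval (p : ℝ[X]) (θ : ℝ) :
    HasDerivAt (trigEval p) (-Real.sin θ / 2 * trigEval (derivative p) θ) θ := by
  rw [mul_comm]
  exact (p.hasDerivAt _).comp θ (((Real.hasDerivAt_cos θ).sub_const 1).div_const 2)

lemma contDiff_trigEval (p : ℝ[X]) : ContDiff ℝ 1 (trigEval p) :=
  (by simpa using p.contDiff_aeval (𝕜 := ℝ) 1 : ContDiff ℝ 1 fun x => p.eval x).comp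
    ((Real.contDiff_cos.sub contDiff_const).div_const 2)

end Polynomial

section HalfAngle

variable {θ : ℝ}

lemma sin_half_pos (hθ : θ ∈ Ioo 0 π) : 0 < Real.sin (θ / 2) :=
  Real.sin_pos_of_pos_of_lt_pi (by linarith [hθ.1]) (by linarith [hθ.1, hθ.2])

lemma cos_half_pos (hθ : θ ∈ Ioo 0 π) : 0 < Real.cos (θ / 2) :=
  Real.cos_pos_of_mem_Ioo ⟨by linarith [hθ.1, Real.pi_pos], by linarith [hθ.2]⟩

lemma sin_eq_two_mul_sin_half_mul_cos_half (θ : ℝ) :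
    Real.sin θ = 2 * Real.sin (θ / 2) * Real.cos (θ / 2) := by
  rw [← Real.sin_two_mul, mul_div_cancel₀ θ two_ne_zero]

lemma cos_eq_two_mul_cos_half_sq_sub_one (θ : ℝ) :
    Real.cos θ = 2 * Real.cos (θ / 2) ^ 2 - 1 := by
  rw [← Real.cos_two_mul, mul_div_cancel₀ θ two_ne_zero]

lemma hasDerivAt_sin_half (θ : ℝ) :
    HasDerivAt (fun θ => Real.sin (θ / 2)) (Real.cos (θ / 2) * (1 / 2)) θ :=
  ((hasDerivAt_id' θ).div_const 2).sin

lemma hasDerivAt_cos_half (θ : ℝ) :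
    HasDerivAt (fun θ => Real.cos (θ / 2)) (-Real.sin (θ / 2) * (1 / 2)) θ :=
  ((hasDerivAt_id' θ).div_const 2).cos

lemma continuous_sin_half_rpow {p : ℝ} (hp : 0 ≤ p) :
    Continuous fun θ : ℝ => Real.sin (θ / 2) ^ p :=
  (by fun_prop : Continuous fun θ : ℝ => Real.sin (θ / 2)).rpow_const fun _ => Or.inr hp

lemma continuous_cos_half_rpow {p : ℝ} (hp : 0 ≤ p) :
    Continuous fun θ : ℝ => Real.cos (θ / 2) ^ p :=
  (by fun_prop : Continuous fun θ : ℝ => Real.cos (θ / 2)).rpow_const fun _ => Or.inr hp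

lemma intervalIntegrable_cos_half_mul_sin_half_rpow {p : ℝ} (hp : -1 < p) :
    IntervalIntegrable (fun θ => Real.cos (θ / 2) * Real.sin (θ / 2) ^ p) volume 0 π := by
  have hp' : 0 < p + 1 := by linarith
  refine intervalIntegral.intervalIntegrable_deriv_of_nonneg
    (g := fun θ => Real.sin (θ / 2) ^ (p + 1) * (2 / (p + 1)))
    ((continuous_sin_half_rpow hp'.le).mul_const _).continuousOn ?_ ?_ <;>
  rw [min_eq_left Real.pi_pos.le, max_eq_right Real.pi_pos.le] <;> intro θ hθ
  · have hderiv := ((hasDerivAt_sin_half θ).rpow_const (p := p + 1)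
      (Or.inl (sin_half_pos hθ).ne')).mul_const (2 / (p + 1))
    refine hderiv.congr_deriv ?_
    rw [add_sub_cancel_right]
    field_simp
  · exact mul_nonneg (cos_half_pos hθ).le (Real.rpow_nonneg (sin_half_pos hθ).le p)

lemma intervalIntegrable_sin_half_mul_cos_half_rpow {p : ℝ} (hp : -1 < p) :
    IntervalIntegrable (fun θ => Real.sin (θ / 2) * Real.cos (θ / 2) ^ p) volume 0 π := by
  have hreflect := ((intervalIntegrable_cos_half_mul_sin_half_rpow hp).comp_sub_left π).symm
  simpa only [sub_zero, sub_self, sub_div, Real.cos_pi_div_two_sub, Real.sin_pi_div_two_sub]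
    using hreflect

end HalfAngle

section JacobiMeasure

variable {α β θ : ℝ}

lemma jPsi_sq (α β : ℝ) (hθ : θ ∈ Ioo 0 π) :
    jPsi α β θ ^ 2 = Real.sin (θ / 2) ^ (2 * α + 1) * Real.cos (θ / 2) ^ (2 * β + 1) := by
  have hs := sin_half_pos hθ
  have hc := cos_half_pos hθ
  rw [jPsi, abs_of_pos hs, mul_pow, ← Real.rpow_mul_natCast hs.le, ← Real.rpow_mul_natCast hc.le]
  congr 2 <;> push_cast <;> ring

lemma jPsi_sq_mul_sin (α β : ℝ) (hθ : θ ∈ Ioo 0 π) :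
    jPsi α β θ ^ 2 * Real.sin θ =
      2 * (Real.sin (θ / 2) ^ (2 * α + 2) * Real.cos (θ / 2) ^ (2 * β + 2)) := by
  rw [jPsi_sq α β hθ, sin_eq_two_mul_sin_half_mul_cos_half θ,
    show 2 * α + 2 = 2 * α + 1 + 1 by ring, show 2 * β + 2 = 2 * β + 1 + 1 by ring,
    Real.rpow_add_one (sin_half_pos hθ).ne' (2 * α + 1),
    Real.rpow_add_one (cos_half_pos hθ).ne' (2 * β + 1)]
  ring

lemma jPsi_add_one_sq (α β : ℝ) (hθ : θ ∈ Ioo 0 π) :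
    jPsi (α + 1) (β + 1) θ ^ 2 = jPsi α β θ ^ 2 * (Real.sin θ / 2) ^ 2 := by
  rw [jPsi_sq _ _ hθ, jPsi_sq _ _ hθ, sin_eq_two_mul_sin_half_mul_cos_half θ,
    show 2 * (α + 1) + 1 = 2 * α + 1 + (2 : ℕ) by push_cast; ring,
    show 2 * (β + 1) + 1 = 2 * β + 1 + (2 : ℕ) by push_cast; ring,
    Real.rpow_add_natCast (sin_half_pos hθ).ne', Real.rpow_add_natCast (cos_half_pos hθ).ne']
  ring

lemma measurable_jPsi_sq (α β : ℝ) : Measurable fun θ => jPsi α β θ ^ 2 := by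
  unfold jPsi
  fun_prop

-- Splitting `1 = cos² (θ/2) + sin² (θ/2)` separates the two endpoint singularities.
lemma jPsi_sq_le (hα : -1 < α) (hβ : -1 < β) (hθ : θ ∈ Ioo 0 π) :
    jPsi α β θ ^ 2 ≤ Real.cos (θ / 2) * Real.sin (θ / 2) ^ (2 * α + 1) +
      Real.sin (θ / 2) * Real.cos (θ / 2) ^ (2 * β + 1) := by
  rw [jPsi_sq α β hθ]
  have hs := sin_half_pos hθ
  have hc := cos_half_pos hθ
  have hsum := Real.sin_sq_add_cos_sq (θ / 2)
  have hs_le : Real.sin (θ / 2) ^ (2 * α + 1) * Real.sin (θ / 2) ≤ 1 := by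
    rw [← Real.rpow_add_one hs.ne']
    exact Real.rpow_le_one hs.le (Real.sin_le_one _) (by linarith)
  have hc_le : Real.cos (θ / 2) ^ (2 * β + 1) * Real.cos (θ / 2) ≤ 1 := by
    rw [← Real.rpow_add_one hc.ne']
    exact Real.rpow_le_one hc.le (Real.cos_le_one _) (by linarith)
  set s := Real.sin (θ / 2)
  set c := Real.cos (θ / 2)
  calc s ^ (2 * α + 1) * c ^ (2 * β + 1)
      = c * s ^ (2 * α + 1) * (c ^ (2 * β + 1) * c) +
          s * c ^ (2 * β + 1) * (s ^ (2 * α + 1) * s) := by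
        linear_combination -s ^ (2 * α + 1) * c ^ (2 * β + 1) * hsum
    _ ≤ c * s ^ (2 * α + 1) * 1 + s * c ^ (2 * β + 1) * 1 := by gcongr
    _ = c * s ^ (2 * α + 1) + s * c ^ (2 * β + 1) := by ring

lemma integrableOn_jPsi_sq (hα : -1 < α) (hβ : -1 < β) :
    IntegrableOn (fun θ => jPsi α β θ ^ 2) (Ioo 0 π) := by
  have hdominant := (intervalIntegrable_cos_half_mul_sin_half_rpow
      (by linarith : -1 < 2 * α + 1)).add
    (intervalIntegrable_sin_half_mul_cos_half_rpow (by linarith : -1 < 2 * β + 1))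
  rw [intervalIntegrable_iff_integrableOn_Ioo_of_le Real.pi_pos.le] at hdominant
  refine Integrable.mono' hdominant (measurable_jPsi_sq α β).aestronglyMeasurable ?_
  filter_upwards [ae_restrict_mem measurableSet_Ioo] with θ hθ
  rw [Real.norm_of_nonneg (sq_nonneg _)]
  exact jPsi_sq_le hα hβ hθ

lemma jacobiMeasurePlus_eq_withDensity (α β : ℝ) : jacobiMeasurePlus α β =
    (volume.restrict (Ioo 0 π)).withDensity fun θ => ENNReal.ofReal (jPsi α β θ ^ 2) := by
  have hsubset : Ioo 0 π ⊆ Ioo (-π) π := Ioo_subset_Ioo_left (by linarith [Real.pi_pos])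
  rw [jacobiMeasurePlus, jacobiMeasure, restrict_withDensity measurableSet_Ioo,
    Measure.restrict_restrict_of_subset hsubset]

lemma ae_jacobiMeasurePlus_mem_Ioo (α β : ℝ) : ∀ᵐ θ ∂jacobiMeasurePlus α β, θ ∈ Ioo 0 π :=
  ae_restrict_mem measurableSet_Ioo

lemma ae_jacobiMeasurePlus_eq_of_eqOn {f g : ℝ → ℝ} (hfg : EqOn f g (Ioo 0 π)) (α β : ℝ) :
    f =ᵐ[jacobiMeasurePlus α β] g :=
  (ae_jacobiMeasurePlus_mem_Ioo α β).mono hfg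

lemma integral_jacobiMeasurePlus (α β : ℝ) (g : ℝ → ℝ) :
    ∫ θ, g θ ∂jacobiMeasurePlus α β = ∫ θ in Ioo 0 π, jPsi α β θ ^ 2 * g θ := by
  rw [jacobiMeasurePlus_eq_withDensity, integral_withDensity_eq_integral_toReal_smul
    (measurable_jPsi_sq α β).ennreal_ofReal (by simp)]
  simp [ENNReal.toReal_ofReal, sq_nonneg]

lemma integrable_jacobiMeasurePlus_iff {g : ℝ → ℝ} : Integrable g (jacobiMeasurePlus α β) ↔
    IntegrableOn (fun θ => jPsi α β θ ^ 2 * g θ) (Ioo 0 π) := by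
  rw [jacobiMeasurePlus_eq_withDensity, integrable_withDensity_iff_integrable_smul'
    (measurable_jPsi_sq α β).ennreal_ofReal (by simp)]
  simp [IntegrableOn, ENNReal.toReal_ofReal, sq_nonneg]

lemma isFiniteMeasure_jacobiMeasurePlus (hα : -1 < α) (hβ : -1 < β) :
    IsFiniteMeasure (jacobiMeasurePlus α β) := by
  rw [jacobiMeasurePlus_eq_withDensity]
  exact isFiniteMeasure_withDensity_ofReal (integrableOn_jPsi_sq hα hβ).2

lemma memLp_jacobiMeasurePlus_of_continuous (hα : -1 < α) (hβ : -1 < β) {g : ℝ → ℝ}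
    (hg : Continuous g) (p : ℝ≥0∞) : MemLp g p (jacobiMeasurePlus α β) := by
  have := isFiniteMeasure_jacobiMeasurePlus hα hβ
  obtain ⟨M, hM⟩ := (isCompact_Icc (a := 0) (b := π)).exists_bound_of_continuousOn hg.continuousOn
  refine MemLp.of_bound hg.aestronglyMeasurable M ?_
  filter_upwards [ae_jacobiMeasurePlus_mem_Ioo α β] with θ hθ
  exact hM θ (Ioo_subset_Icc_self hθ)

lemma integrable_jacobiMeasurePlus_of_continuous (hα : -1 < α) (hβ : -1 < β) {g : ℝ → ℝ}
    (hg : Continuous g) : Integrable g (jacobiMeasurePlus α β) :=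
  memLp_one_iff_integrable.1 (memLp_jacobiMeasurePlus_of_continuous hα hβ hg 1)

lemma integral_sin_div_two_sq_mul (α β : ℝ) (g : ℝ → ℝ) :
    ∫ θ, (Real.sin θ / 2) ^ 2 * g θ ∂jacobiMeasurePlus α β =
      ∫ θ, g θ ∂jacobiMeasurePlus (α + 1) (β + 1) := by
  rw [integral_jacobiMeasurePlus, integral_jacobiMeasurePlus]
  refine setIntegral_congr_fun measurableSet_Ioo fun θ hθ => ?_
  simp only [jPsi_add_one_sq α β hθ, mul_assoc]

end JacobiMeasure

section Adjoint

open Polynomial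

variable {α β θ : ℝ} {F g : ℝ → ℝ}

lemma delStar_const_mul (α β c : ℝ) (f : ℝ → ℝ) :
    delStar α β (fun θ => c * f θ) = fun θ => c * delStar α β f θ := by
  funext θ
  rw [delStar, delStar, deriv_const_mul_field]
  ring

lemma eqOn_delStar_of_eqOn {f g : ℝ → ℝ} {s : Set ℝ} (hfg : EqOn f g s) (hs : IsOpen s)
    (α β : ℝ) : EqOn (delStar α β f) (delStar α β g) s := fun θ hθ => by
  rw [delStar, delStar, hfg.deriv hs hθ, hfg hθ]

lemma delStar_sin_mul (α β : ℝ) (hF : DifferentiableAt ℝ F θ) (hθ : θ ∈ Ioo 0 π) :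
    delStar α β (fun θ => Real.sin θ * F θ) θ =
      -(Real.sin θ * deriv F θ + (α - β + (α + β + 2) * Real.cos θ) * F θ) := by
  have hs := (sin_half_pos hθ).ne'
  have hc := (cos_half_pos hθ).ne'
  have hcot : Real.cos (θ / 2) / Real.sin (θ / 2) * Real.sin θ = 1 + Real.cos θ := by
    rw [sin_eq_two_mul_sin_half_mul_cos_half θ, cos_eq_two_mul_cos_half_sq_sub_one θ]
    field_simp
    ring
  have htan : Real.tan (θ / 2) * Real.sin θ = 1 - Real.cos θ := by
    rw [Real.tan_eq_sin_div_cos, sin_eq_two_mul_sin_half_mul_cos_half θ,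
      cos_eq_two_mul_cos_half_sq_sub_one θ, Real.cos_sq']
    field_simp
    ring
  rw [delStar, ((Real.hasDerivAt_sin θ).fun_mul hF.hasDerivAt).deriv]
  linear_combination -(α + 1 / 2) * F θ * hcot + (β + 1 / 2) * F θ * htan

lemma eqOn_delStar_sin_mul_trigEval (α β : ℝ) (p : ℝ[X]) :
    EqOn (delStar α β fun θ => Real.sin θ * trigEval p θ)
      (trigEval (C (-2) * weightedDerivative (α + 1) (β + 1) p)) (Ioo 0 π) := fun θ hθ => by
  have hderiv := hasDerivAt_trigEval p θ
  rw [delStar_sin_mul α β hderiv.differentiableAt hθ, hderiv.deriv]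
  simp only [trigEval, weightedDerivative, eval_mul, eval_add, eval_C, eval_X, eval_one]
  linear_combination
    (derivative p).eval ((Real.cos θ - 1) / 2) / 2 * Real.sin_sq_add_cos_sq θ

lemma hasDerivAt_jPsi_sq (α β : ℝ) (hθ : θ ∈ Ioo 0 π) :
    HasDerivAt (fun θ => jPsi α β θ ^ 2) (jPsi α β θ ^ 2 *
      ((α + 1 / 2) * (Real.cos (θ / 2) / Real.sin (θ / 2)) -
        (β + 1 / 2) * Real.tan (θ / 2))) θ := by
  have hs := (sin_half_pos hθ).ne'
  have hc := (cos_half_pos hθ).ne'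
  have heq : (fun θ => jPsi α β θ ^ 2) =ᶠ[nhds θ]
      fun θ => Real.sin (θ / 2) ^ (2 * α + 1) * Real.cos (θ / 2) ^ (2 * β + 1) := by
    filter_upwards [Ioo_mem_nhds hθ.1 hθ.2] with x hx using jPsi_sq α β hx
  have hderiv := ((hasDerivAt_sin_half θ).rpow_const (p := 2 * α + 1) (Or.inl hs)).fun_mul
    ((hasDerivAt_cos_half θ).rpow_const (p := 2 * β + 1) (Or.inl hc))
  refine (hderiv.congr_of_eventuallyEq heq).congr_deriv ?_
  rw [jPsi_sq α β hθ, Real.rpow_sub_one hs, Real.rpow_sub_one hc, Real.tan_eq_sin_div_cos]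
  field_simp
  ring

lemma hasDerivAt_jPsi_sq_mul (α β : ℝ) {f : ℝ → ℝ} (hf : DifferentiableAt ℝ f θ)
    (hθ : θ ∈ Ioo 0 π) :
    HasDerivAt (fun θ => jPsi α β θ ^ 2 * f θ) (-(jPsi α β θ ^ 2 * delStar α β f θ)) θ := by
  refine ((hasDerivAt_jPsi_sq α β hθ).fun_mul hf.hasDerivAt).congr_deriv ?_
  rw [delStar]
  ring

lemma exists_continuous_eqOn_delStar_sin_mul (α β : ℝ) (hF : ContDiff ℝ 1 F) :
    ∃ G : ℝ → ℝ, Continuous G ∧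
      EqOn (delStar α β fun θ => Real.sin θ * F θ) G (Ioo 0 π) := by
  refine ⟨_, ?_, fun θ hθ => delStar_sin_mul α β (hF.differentiable one_ne_zero θ) hθ⟩
  have := hF.continuous
  have := hF.continuous_deriv le_rfl
  fun_prop

lemma integral_jPsi_sq_mul_eq_zero (hα : -1 < α) (hβ : -1 < β) {G H : ℝ → ℝ} (hG : Continuous G)
    (hderiv : ∀ θ ∈ Ioo 0 π, HasDerivAt (fun θ => jPsi α β θ ^ 2 * (Real.sin θ * G θ))
      (jPsi α β θ ^ 2 * H θ) θ)
    (hH : Integrable H (jacobiMeasurePlus α β)) :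
    ∫ θ, H θ ∂jacobiMeasurePlus α β = 0 := by
  have ha : 0 < 2 * α + 2 := by linarith
  have hb : 0 < 2 * β + 2 := by linarith
  set B : ℝ → ℝ := fun θ =>
    2 * (Real.sin (θ / 2) ^ (2 * α + 2) * Real.cos (θ / 2) ^ (2 * β + 2)) * G θ with hB
  have hBcont : Continuous B :=
    (((continuous_sin_half_rpow ha.le).mul (continuous_cos_half_rpow hb.le)).const_mul 2).mul hG
  have hBeq : EqOn B (fun θ => jPsi α β θ ^ 2 * (Real.sin θ * G θ)) (Ioo 0 π) := fun θ hθ => by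
    simp only [hB, ← mul_assoc, jPsi_sq_mul_sin α β hθ]
  have hBderiv : ∀ θ ∈ Ioo 0 π, HasDerivAt B (jPsi α β θ ^ 2 * H θ) θ := fun θ hθ =>
    (hderiv θ hθ).congr_of_eventuallyEq (hBeq.eventuallyEq_of_mem (Ioo_mem_nhds hθ.1 hθ.2))
  rw [integral_jacobiMeasurePlus, ← integral_Ioc_eq_integral_Ioo,
    ← intervalIntegral.integral_of_le Real.pi_pos.le,
    intervalIntegral.integral_eq_sub_of_hasDerivAt_of_le Real.pi_pos.le hBcont.continuousOn
      hBderiv ((intervalIntegrable_iff_integrableOn_Ioo_of_le Real.pi_pos.le).2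
        (integrable_jacobiMeasurePlus_iff.1 hH))]
  simp [hB, Real.zero_rpow ha.ne', Real.zero_rpow hb.ne']

theorem integral_delStar_sin_mul_mul (hα : -1 < α) (hβ : -1 < β) (hF : ContDiff ℝ 1 F)
    (hg : ContDiff ℝ 1 g) :
    ∫ θ, delStar α β (fun θ => Real.sin θ * F θ) θ * g θ ∂jacobiMeasurePlus α β =
      ∫ θ, Real.sin θ * F θ * deriv g θ ∂jacobiMeasurePlus α β := by
  set f : ℝ → ℝ := fun θ => Real.sin θ * F θ with hf
  have hFcont := hF.continuous
  have hgcont := hg.continuous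
  have := hg.continuous_deriv le_rfl
  have hfdiff : Differentiable ℝ f :=
    Real.differentiable_sin.fun_mul (hF.differentiable one_ne_zero)
  obtain ⟨G, hGcont, hfG⟩ := exists_continuous_eqOn_delStar_sin_mul α β hF
  have hintegrable_delStar :
      Integrable (fun θ => delStar α β f θ * g θ) (jacobiMeasurePlus α β) :=
    (integrable_jacobiMeasurePlus_of_continuous hα hβ (hGcont.mul hgcont)).congr
      (ae_jacobiMeasurePlus_eq_of_eqOn (fun θ hθ => congrArg (· * g θ) (hfG hθ).symm) α β)
  have hintegrable_deriv : Integrable (fun θ => f θ * deriv g θ) (jacobiMeasurePlus α β) :=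
    integrable_jacobiMeasurePlus_of_continuous hα hβ (by fun_prop)
  have htotal : ∫ θ, (f θ * deriv g θ - delStar α β f θ * g θ) ∂jacobiMeasurePlus α β = 0 := by
    have hfactor : (fun θ => jPsi α β θ ^ 2 * (Real.sin θ * (F θ * g θ))) =
        fun θ => jPsi α β θ ^ 2 * f θ * g θ := by
      funext θ
      simp only [hf]
      ring
    refine integral_jPsi_sq_mul_eq_zero hα hβ (hFcont.fun_mul hgcont) (fun θ hθ => ?_)
      (hintegrable_deriv.sub hintegrable_delStar)
    have hproduct := (hasDerivAt_jPsi_sq_mul α β (hfdiff θ) hθ).fun_mul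
      (hg.differentiable one_ne_zero θ).hasDerivAt
    rw [hfactor]
    exact hproduct.congr_deriv (by ring)
  rw [integral_sub hintegrable_deriv hintegrable_delStar] at htotal
  linarith

end Adjoint

section Eigenfunctions

open Polynomial

variable {α β κ κ' : ℝ} {p q : ℝ[X]}

lemma hasDerivAt_trigEval_weightedDerivative
    (hq : derivative (weightedDerivative (α + 1) (β + 1) q) = C κ * q) (θ : ℝ) :
    HasDerivAt (trigEval (C (-2) * weightedDerivative (α + 1) (β + 1) q))
      (κ * (Real.sin θ * trigEval q θ)) θ := by
  refine (hasDerivAt_trigEval _ θ).congr_deriv ?_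
  rw [derivative_C_mul, hq]
  simp only [trigEval, eval_mul, eval_C]
  ring

lemma eqOn_deriv_delStar_sin_mul_trigEval
    (hq : derivative (weightedDerivative (α + 1) (β + 1) q) = C κ * q) :
    EqOn (deriv (delStar α β fun θ => Real.sin θ * trigEval q θ))
      (fun θ => κ * (Real.sin θ * trigEval q θ)) (Ioo 0 π) := fun θ hθ => by
  rw [(eqOn_delStar_sin_mul_trigEval α β q).deriv isOpen_Ioo hθ]
  exact (hasDerivAt_trigEval_weightedDerivative hq θ).deriv

theorem integral_delStar_mul_delStar (hα : -1 < α) (hβ : -1 < β) (p : ℝ[X])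
    (hq : derivative (weightedDerivative (α + 1) (β + 1) q) = C κ * q) :
    ∫ θ, delStar α β (fun θ => Real.sin θ * trigEval p θ) θ *
        delStar α β (fun θ => Real.sin θ * trigEval q θ) θ ∂jacobiMeasurePlus α β =
      κ * ∫ θ, (Real.sin θ * trigEval p θ) * (Real.sin θ * trigEval q θ)
        ∂jacobiMeasurePlus α β := by
  set f : ℝ → ℝ := fun θ => Real.sin θ * trigEval p θ
  set g := trigEval (C (-2) * weightedDerivative (α + 1) (β + 1) q) with hg
  calc ∫ θ, delStar α β f θ * delStar α β (fun θ => Real.sin θ * trigEval q θ) θ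
        ∂jacobiMeasurePlus α β
      = ∫ θ, delStar α β f θ * g θ ∂jacobiMeasurePlus α β :=
        integral_congr_ae (ae_jacobiMeasurePlus_eq_of_eqOn (fun θ hθ =>
          congrArg (delStar α β f θ * ·) (eqOn_delStar_sin_mul_trigEval α β q hθ)) α β)
    _ = ∫ θ, f θ * deriv g θ ∂jacobiMeasurePlus α β :=
        integral_delStar_sin_mul_mul hα hβ (contDiff_trigEval p) (contDiff_trigEval _)
    _ = ∫ θ, κ * (f θ * (Real.sin θ * trigEval q θ)) ∂jacobiMeasurePlus α β := by
        simp only [hg, (hasDerivAt_trigEval_weightedDerivative hq _).deriv, mul_left_comm]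
    _ = κ * ∫ θ, f θ * (Real.sin θ * trigEval q θ) ∂jacobiMeasurePlus α β :=
        integral_const_mul _ _

lemma eigenvalue_mul_integral_comm (hα : -1 < α) (hβ : -1 < β)
    (hp : derivative (weightedDerivative (α + 1) (β + 1) p) = C κ * p)
    (hq : derivative (weightedDerivative (α + 1) (β + 1) q) = C κ' * q) :
    κ * ∫ θ, (Real.sin θ * trigEval p θ) * (Real.sin θ * trigEval q θ) ∂jacobiMeasurePlus α β =
      κ' * ∫ θ, (Real.sin θ * trigEval p θ) * (Real.sin θ * trigEval q θ)
        ∂jacobiMeasurePlus α β := by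
  have hqp := integral_delStar_mul_delStar hα hβ q hp
  simp only [mul_comm (Real.sin _ * trigEval q _),
    mul_comm (delStar α β (fun θ => Real.sin θ * trigEval q θ) _)] at hqp
  rw [← hqp, ← integral_delStar_mul_delStar hα hβ p hq]

lemma deltaOdd_succ (α β : ℝ) (N : ℕ) (f : ℝ → ℝ) : deltaOdd α β (N + 1) f =
    (if N % 2 = 0 then delStar α β else deriv) (deltaOdd α β N f) := rfl

lemma eqOn_deltaOdd_add_two {f : ℝ → ℝ} {s : Set ℝ} (hs : IsOpen s)
    (hf : EqOn (deriv (delStar α β f)) (fun θ => κ * f θ) s) (N : ℕ) :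
    EqOn (deltaOdd α β (N + 2) f) (fun θ => κ * deltaOdd α β N f θ) s := by
  induction N with
  | zero => exact hf
  | succ N ih =>
    intro θ hθ
    rw [deltaOdd_succ α β (N + 2), deltaOdd_succ α β N, Nat.add_mod_right]
    split_ifs
    · rw [eqOn_delStar_of_eqOn ih hs α β hθ, delStar_const_mul]
    · rw [ih.deriv hs hθ, deriv_const_mul_field]

lemma memLp_deltaOdd (hα : -1 < α) (hβ : -1 < β)
    (hq : derivative (weightedDerivative (α + 1) (β + 1) q) = C κ * q) (r : ℝ≥0∞) :
    ∀ N, MemLp (deltaOdd α β N fun θ => Real.sin θ * trigEval q θ) r (jacobiMeasurePlus α β)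
  | 0 => memLp_jacobiMeasurePlus_of_continuous hα hβ
      (Real.continuous_sin.mul (contDiff_trigEval q).continuous) r
  | 1 => (memLp_congr_ae (ae_jacobiMeasurePlus_eq_of_eqOn
      (eqOn_delStar_sin_mul_trigEval α β q) α β)).2
        (memLp_jacobiMeasurePlus_of_continuous hα hβ (contDiff_trigEval _).continuous r)
  | N + 2 => (memLp_congr_ae (ae_jacobiMeasurePlus_eq_of_eqOn (eqOn_deltaOdd_add_two isOpen_Ioo
      (eqOn_deriv_delStar_sin_mul_trigEval hq) N) α β)).2
        ((memLp_deltaOdd hα hβ hq r N).const_mul κ)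

theorem integral_deltaOdd_mul_deltaOdd (hα : -1 < α) (hβ : -1 < β)
    (hp : derivative (weightedDerivative (α + 1) (β + 1) p) = C κ * p)
    (hq : derivative (weightedDerivative (α + 1) (β + 1) q) = C κ' * q) :
    ∀ N, ∫ θ, deltaOdd α β N (fun θ => Real.sin θ * trigEval p θ) θ *
        deltaOdd α β N (fun θ => Real.sin θ * trigEval q θ) θ ∂jacobiMeasurePlus α β =
      κ' ^ N * ∫ θ, (Real.sin θ * trigEval p θ) * (Real.sin θ * trigEval q θ)
        ∂jacobiMeasurePlus α β
  | 0 => by simp only [deltaOdd, pow_zero, one_mul]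
  | 1 => by
    rw [pow_one]
    exact integral_delStar_mul_delStar hα hβ p hq
  | N + 2 => by
    have hp' := eqOn_deltaOdd_add_two isOpen_Ioo (eqOn_deriv_delStar_sin_mul_trigEval hp) N
    have hq' := eqOn_deltaOdd_add_two isOpen_Ioo (eqOn_deriv_delStar_sin_mul_trigEval hq) N
    rw [integral_congr_ae (ae_jacobiMeasurePlus_eq_of_eqOn
      (fun θ hθ => congrArg₂ (· * ·) (hp' hθ) (hq' hθ)) α β)]
    simp only [mul_mul_mul_comm κ]
    rw [integral_const_mul, integral_deltaOdd_mul_deltaOdd hα hβ hp hq N]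
    linear_combination κ' ^ (N + 1) * eigenvalue_mul_integral_comm hα hβ hp hq

end Eigenfunctions

section OddSystem

open Polynomial

variable {α β : ℝ}

/-- The polynomial `p` for which `Φ_{2n+1}^{α,β}(θ) = sin θ · p((cos θ - 1) / 2)`. -/
def oddPhiPoly (α β : ℝ) (n : ℕ) : ℝ[X] :=
  C ((√2)⁻¹ / 2 * cJ (α + 1) (β + 1) n) * jacobiPoly (α + 1) (β + 1) n

lemma symPhi_two_mul_add_one (α β : ℝ) (n : ℕ) :
    symPhi α β (2 * n + 1) = fun θ => (√2)⁻¹ * (Real.sin θ / 2) * trigP (α + 1) (β + 1) n θ := by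
  funext θ
  simp [symPhi]

lemma symPhi_two_mul_add_one_eq_sin_mul (α β : ℝ) (n : ℕ) :
    symPhi α β (2 * n + 1) = fun θ => Real.sin θ * trigEval (oddPhiPoly α β n) θ := by
  funext θ
  simp only [symPhi_two_mul_add_one, trigP, trigEval, oddPhiPoly, eval_mul, eval_C,
    eval_jacobiPoly]
  ring

lemma jLam_succ_sub_jLam_zero (α β : ℝ) (n : ℕ) :
    jLam α β (n + 1) - jLam α β 0 = (n + 1) * (n + (α + 1) + (β + 1)) := by
  simp only [jLam]
  push_cast
  ring

lemma jLam_succ_sub_jLam_zero_nonneg (hα : -1 < α) (hβ : -1 < β) (n : ℕ) :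
    0 ≤ jLam α β (n + 1) - jLam α β 0 := by
  rw [jLam_succ_sub_jLam_zero]
  have : (0 : ℝ) ≤ n := n.cast_nonneg
  exact mul_nonneg (by linarith) (by linarith)

lemma jLam_succ_injective (hα : -1 < α) (hβ : -1 < β) :
    Function.Injective fun n => jLam α β (n + 1) := fun n m hnm => by
  have : (0 : ℝ) ≤ n := n.cast_nonneg
  have : (0 : ℝ) ≤ m := m.cast_nonneg
  have hroot := (sq_eq_sq₀ (by push_cast; linarith) (by push_cast; linarith)).1 hnm
  simpa using hroot

lemma derivative_weightedDerivative_oddPhiPoly (hα : -1 < α) (hβ : -1 < β) (n : ℕ) :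
    derivative (weightedDerivative (α + 1) (β + 1) (oddPhiPoly α β n)) =
      C (jLam α β (n + 1) - jLam α β 0) * oddPhiPoly α β n := by
  rw [oddPhiPoly, weightedDerivative_C_mul, derivative_C_mul,
    derivative_weightedDerivative_jacobiPoly (by linarith) (by linarith), jLam_succ_sub_jLam_zero,
    mul_left_comm]

lemma integral_symPhi_mul_symPhi (hα : -1 < α) (hβ : -1 < β) {n m : ℕ} (hnm : n ≠ m) :
    ∫ θ, symPhi α β (2 * n + 1) θ * symPhi α β (2 * m + 1) θ ∂jacobiMeasurePlus α β = 0 := by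
  have hcomm := eigenvalue_mul_integral_comm hα hβ
    (derivative_weightedDerivative_oddPhiPoly hα hβ n)
    (derivative_weightedDerivative_oddPhiPoly hα hβ m)
  simp only [symPhi_two_mul_add_one_eq_sin_mul]
  rw [mul_eq_mul_right_iff, sub_left_inj] at hcomm
  exact hcomm.resolve_left ((jLam_succ_injective hα hβ).ne hnm)

theorem integral_deltaOdd_symPhi_mul_deltaOdd_symPhi (hα : -1 < α) (hβ : -1 < β) (N n m : ℕ) :
    ∫ θ, deltaOdd α β N (symPhi α β (2 * n + 1)) θ * deltaOdd α β N (symPhi α β (2 * m + 1)) θ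
        ∂jacobiMeasurePlus α β =
      (jLam α β (m + 1) - jLam α β 0) ^ N *
        ∫ θ, symPhi α β (2 * n + 1) θ * symPhi α β (2 * m + 1) θ ∂jacobiMeasurePlus α β := by
  simp only [symPhi_two_mul_add_one_eq_sin_mul]
  exact integral_deltaOdd_mul_deltaOdd hα hβ (derivative_weightedDerivative_oddPhiPoly hα hβ n)
    (derivative_weightedDerivative_oddPhiPoly hα hβ m) N

theorem isOrthogonalSystem_deltaOdd_symPhi (hα : -1 < α) (hβ : -1 < β) (N : ℕ) :
    IsOrthogonalSystem (jacobiMeasurePlus α β) fun n =>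
      deltaOdd α β N (symPhi α β (2 * n + 1)) where
  memLp n := by
    rw [symPhi_two_mul_add_one_eq_sin_mul]
    exact memLp_deltaOdd hα hβ (derivative_weightedDerivative_oddPhiPoly hα hβ n) 2 N
  integral_mul_eq_zero n m hnm := by
    simp only [integral_deltaOdd_symPhi_mul_deltaOdd_symPhi hα hβ,
      integral_symPhi_mul_symPhi hα hβ hnm, mul_zero]

-- Not an equality, because `cJ α β n` is `0 ^ (-1 / 2) = 0` if the integral defining it is `0`.
lemma integral_trigP_sq_le_one (α β : ℝ) (n : ℕ) :
    ∫ θ, trigP α β n θ ^ 2 ∂jacobiMeasurePlus α β ≤ 1 := by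
  simp only [trigP, mul_pow, integral_const_mul, cJ]
  set I := ∫ θ, jacobiP α β n (Real.cos θ) ^ 2 ∂jacobiMeasurePlus α β
  have hI : 0 ≤ I := integral_nonneg fun θ => sq_nonneg _
  rw [← Real.rpow_mul_natCast hI, show (-(1 / 2) : ℝ) * (2 : ℕ) = -1 by norm_num,
    Real.rpow_neg_one]
  exact inv_mul_le_one

lemma integral_symPhi_sq_le_one (α β : ℝ) (n : ℕ) :
    ∫ θ, symPhi α β (2 * n + 1) θ ^ 2 ∂jacobiMeasurePlus α β ≤ 1 := by
  simp only [symPhi_two_mul_add_one, mul_pow, mul_assoc, integral_const_mul,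
    integral_sin_div_two_sq_mul, inv_pow, Real.sq_sqrt zero_le_two]
  linarith [integral_trigP_sq_le_one (α + 1) (β + 1) n]

lemma rpow_neg_half_sq_mul_pow_le_one {x y : ℝ} (hx : 0 ≤ x) (hxy : x ≤ y) (N : ℕ) :
    (y ^ (-(N : ℝ) / 2)) ^ 2 * x ^ N ≤ 1 := by
  have hy := hx.trans hxy
  calc (y ^ (-(N : ℝ) / 2)) ^ 2 * x ^ N = (y ^ N)⁻¹ * x ^ N := by
        rw [← Real.rpow_mul_natCast hy, Nat.cast_ofNat, div_mul_cancel₀ _ two_ne_zero,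
          Real.rpow_neg hy, Real.rpow_natCast]
    _ ≤ (y ^ N)⁻¹ * y ^ N := by gcongr
    _ ≤ 1 := inv_mul_le_one

lemma restRiesz_multiplier_le_one (hα : -1 < α) (hβ : -1 < β) (N n : ℕ) :
    (jLam α β (n + 1) ^ (-(N : ℝ) / 2)) ^ 2 *
      (∫ θ, symPhi α β (2 * n + 1) θ ^ 2 ∂jacobiMeasurePlus α β) *
      (∫ θ, deltaOdd α β N (symPhi α β (2 * n + 1)) θ ^ 2 ∂jacobiMeasurePlus α β) ≤ 1 := by
  have hnorm := integral_deltaOdd_symPhi_mul_deltaOdd_symPhi hα hβ N n n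
  simp only [← sq] at hnorm
  rw [hnorm]
  set q := ∫ θ, symPhi α β (2 * n + 1) θ ^ 2 ∂jacobiMeasurePlus α β
  set lam := jLam α β (n + 1)
  have hq : 0 ≤ q := integral_nonneg fun θ => sq_nonneg _
  have hq_sq : q ^ 2 ≤ 1 := pow_le_one₀ hq (integral_symPhi_sq_le_one α β n)
  have hlam : lam - jLam α β 0 ≤ lam := sub_le_self _ (sq_nonneg _)
  have hratio : (lam ^ (-(N : ℝ) / 2)) ^ 2 * (lam - jLam α β 0) ^ N ≤ 1 :=
    rpow_neg_half_sq_mul_pow_le_one (jLam_succ_sub_jLam_zero_nonneg hα hβ n) hlam N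
  calc (lam ^ (-(N : ℝ) / 2)) ^ 2 * q * ((lam - jLam α β 0) ^ N * q)
      = (lam ^ (-(N : ℝ) / 2)) ^ 2 * (lam - jLam α β 0) ^ N * q ^ 2 := by ring
    _ ≤ 1 := mul_le_one₀ hratio (sq_nonneg q) hq_sq

theorem lintegral_restRiesz_sq_le (hα : -1 < α) (hβ : -1 < β) (N : ℕ) {f : ℝ → ℝ}
    (hf : f ∈ Submodule.span ℝ (range fun n : ℕ => symPhi α β (2 * n + 1))) :
    ∫⁻ θ, ENNReal.ofReal (restRiesz α β N f θ ^ 2) ∂jacobiMeasurePlus α β ≤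
      ∫⁻ θ, ENNReal.ofReal (f θ ^ 2) ∂jacobiMeasurePlus α β := by
  have hsymPhi := isOrthogonalSystem_deltaOdd_symPhi hα hβ 0
  have hdelta := isOrthogonalSystem_deltaOdd_symPhi hα hβ N
  simpa only [restRiesz, deltaOdd, ENNReal.ofReal_one, one_mul] using
    hsymPhi.lintegral_tsum_coeff_sq_le hdelta zero_le_one
      (restRiesz_multiplier_le_one hα hβ N) hf

end OddSystem

/-- Theorem (L²(μ⁺) boundedness of `(R̃_N^{α,β})⁺` on the span of the odd `Φ`'s). -/
theorem restRiesz_L2_bounded (α β : ℝ) (hα : -1 < α) (hβ : -1 < β) (N : ℕ) (hN : 1 ≤ N) :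
    ∃ C : ℝ, 0 < C ∧ ∀ f : ℝ → ℝ,
      f ∈ Submodule.span ℝ (Set.range fun n : ℕ => symPhi α β (2 * n + 1)) →
      (∫⁻ θ, ENNReal.ofReal (restRiesz α β N f θ ^ 2) ∂(jacobiMeasurePlus α β)) ^ (1 / 2 : ℝ) ≤
        ENNReal.ofReal C *
          (∫⁻ θ, ENNReal.ofReal (f θ ^ 2) ∂(jacobiMeasurePlus α β)) ^ (1 / 2 : ℝ) := by
  refine ⟨1, one_pos, fun f hf => ?_⟩
  rw [ENNReal.ofReal_one, one_mul]
  exact ENNReal.rpow_le_rpow (lintegral_restRiesz_sq_le hα hβ N hf) (by norm_num)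

end
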